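/- arXiv:math/0610523 — 10 statements merged into one kernel-verified Lean document; each statement's English description precedes it below -/
import Mathlib

section
/- Let X be a square group. Then the function T := H∘P − id : X_ee → X_ee (that is, T(x) = H(P(x)) − x) is a group homomorphism and an involution: T(T(x)) = x for all x ∈ X_ee. -/
/-!
Since the cross effect of `H` vanishes on the image of `P`, the composite `H ∘ P` is additive,
hence so is `T = H ∘ P - id`. The relation `P (H (P x)) = P x + P x` gives `P ∘ T = P`, so
`T (T x) = H (P x) - T x = x`.
-/

/-- The cross effect `(a|b)_H = H(a+b) - H(b) - H(a)` of a function `H` between groups. -/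
def crossEff {Xe Xee : Type*} [AddGroup Xe] [AddCommGroup Xee]
    (H : Xe → Xee) (a b : Xe) : Xee :=
  H (a + b) - H b - H a

/-- A square group structure on a (not necessarily abelian) group `Xe` and an abelian
group `Xee`, given by a homomorphism `P : Xee → Xe` and a quadratic map `H : Xe → Xee`. -/
structure IsSquareGroup {Xe Xee : Type*} [AddGroup Xe] [AddCommGroup Xee]
    (P : Xee →+ Xe) (H : Xe → Xee) : Prop where
  cross_add_left : ∀ a b c : Xe,
    crossEff H (a + b) c = crossEff H a c + crossEff H b c
  cross_add_right : ∀ a b c : Xe,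
    crossEff H a (b + c) = crossEff H a b + crossEff H a c
  cross_P_left : ∀ (x : Xee) (b : Xe), crossEff H (P x) b = 0
  cross_P_right : ∀ (a : Xe) (y : Xee), crossEff H a (P y) = 0
  P_cross : ∀ a b : Xe, P (crossEff H a b) = -a - b + a + b
  P_H_P : ∀ x : Xee, P (H (P x)) = P x + P x

/-- For a square group `X`, the function `T = H∘P − id : X_ee → X_ee` is a
group homomorphism and an involution. -/
theorem squareGroup_T_hom_involution {Xe Xee : Type*} [AddGroup Xe] [AddCommGroup Xee]
    (P : Xee →+ Xe) (H : Xe → Xee) (hsq : IsSquareGroup P H) :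
    let T : Xee → Xee := fun v => H (P v) - v
    (∀ x y : Xee, T (x + y) = T x + T y) ∧ (∀ x : Xee, T (T x) = x) := by
  have hadd : ∀ x y : Xee, H (P (x + y)) = H (P x) + H (P y) := by
    intro x y
    have h := hsq.cross_P_left x (P y)
    rw [crossEff, ← map_add, sub_sub, sub_eq_zero] at h
    rw [h, add_comm]
  intro T
  refine ⟨fun x y => ?_, fun x => ?_⟩
  · simp only [T, hadd]
    abel
  · have hPT : P (H (P x) - x) = P x := by
      rw [map_sub, hsq.P_H_P, add_sub_cancel_right]
    simp only [T, hPT, sub_sub_cancel]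
end

section
/- Let X be a square group and set T = H∘P − id on X_ee. Then the function Δ : X_e → X_ee defined by Δ(x) = (x|x)_H − H(x) + T(H(x)) is a group homomorphism and satisfies T(Δ(x)) = −Δ(x) for all x ∈ X_e. -/
namespace IsSquareGroup

variable {Xe Xee : Type*} [AddGroup Xe] [AddCommGroup Xee] {P : Xee →+ Xe} {H : Xe → Xee}

theorem H_add (H : Xe → Xee) (a b : Xe) : H (a + b) = crossEff H a b + H a + H b := by
  unfold crossEff
  abel

theorem HP_add (h : IsSquareGroup P H) (v w : Xee) :
    H (P (v + w)) = H (P v) + H (P w) := by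
  rw [map_add, H_add H, h.cross_P_left, zero_add]

/-- The composite `H ∘ P` as an additive endomorphism of `Xee`. -/
def HP (h : IsSquareGroup P H) : Xee →+ Xee :=
  AddMonoidHom.mk' (fun v => H (P v)) h.HP_add

theorem HP_apply (h : IsSquareGroup P H) (v : Xee) : H (P v) = h.HP v := rfl

theorem HP_HP (h : IsSquareGroup P H) (v : Xee) : h.HP (h.HP v) = h.HP v + h.HP v := by
  rw [← h.HP_apply, ← h.HP_apply v, h.P_H_P, ← map_add, h.HP_add]

/-- Equivalently, `T (a|b)_H = -(b|a)_H`. -/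
theorem HP_cross (h : IsSquareGroup P H) (a b : Xe) :
    h.HP (crossEff H a b) = crossEff H a b - crossEff H b a := by
  have hc : a + b = b + a + P (crossEff H a b) := by
    rw [h.P_cross]
    simp only [sub_eq_add_neg, add_assoc, add_neg_cancel_left]
  have hH := congrArg H hc
  rw [H_add H (b + a), h.cross_P_right, zero_add, H_add H a b, H_add H b a, h.HP_apply] at hH
  rw [eq_sub_iff_add_eq]
  apply add_right_cancel (b := H a + H b)
  rw [← add_assoc (crossEff H a b), hH]
  abel

end IsSquareGroup

/-- For a square group `X` with `T = H∘P − id`, the function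
`Δ(x) = (x|x)_H − H(x) + T(H(x))` is a group homomorphism `X_e → X_ee` and satisfies
`T(Δ(x)) = −Δ(x)`. -/
theorem squareGroup_Delta_hom {Xe Xee : Type*} [AddGroup Xe] [AddCommGroup Xee]
    (P : Xee →+ Xe) (H : Xe → Xee) (hsq : IsSquareGroup P H) :
    let T : Xee → Xee := fun v => H (P v) - v
    let Δ : Xe → Xee := fun x => crossEff H x x - H x + T (H x)
    (∀ x y : Xe, Δ (x + y) = Δ x + Δ y) ∧ (∀ x : Xe, T (Δ x) = -Δ x) := by
  intro T Δ
  constructor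
  · intro x y
    simp only [T, Δ, hsq.HP_apply]
    rw [IsSquareGroup.H_add H x y]
    simp only [hsq.cross_add_left, hsq.cross_add_right, map_add, hsq.HP_cross]
    abel
  · intro x
    simp only [T, Δ, hsq.HP_apply]
    simp only [map_add, map_sub, hsq.HP_cross, hsq.HP_HP]
    abel
end

section
/- Let X be a square group. Then the image of P : X_ee → X_e is contained in the center of X_e, every commutator −a−b+a+b of elements a,b ∈ X_e is central, and consequently X_e is a nilpotent group of class at most 2 (all triple commutators vanish). -/
/-- In a square group `X`, the image of `P` is central in `X_e`, all
commutators `−a−b+a+b` are central, and all triple commutators vanish, so `X_e` is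
nilpotent of class at most 2. -/
theorem squareGroup_nil_two {Xe Xee : Type*} [AddGroup Xe] [AddCommGroup Xee]
    (P : Xee →+ Xe) (H : Xe → Xee) (hsq : IsSquareGroup P H) :
    (∀ (x : Xee) (b : Xe), P x + b = b + P x) ∧
    (∀ a b c : Xe, (-a - b + a + b) + c = c + (-a - b + a + b)) ∧
    (∀ a b c : Xe, -(-a - b + a + b) - c + (-a - b + a + b) + c = 0) := by
  -- `P x` is central because its commutator with `b` is `P` of the vanishing cross effect `(P x|b)_H`.
  have hP : ∀ (x : Xee) (b : Xe), P x + b = b + P x := by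
    intro x b
    have h := hsq.P_cross (P x) b
    rw [hsq.cross_P_left, map_zero, add_assoc] at h
    simpa using (neg_eq_of_add_eq_zero_right h.symm).symm
  -- Every commutator lies in the image of `P`.
  have hC : ∀ a b c : Xe, (-a - b + a + b) + c = c + (-a - b + a + b) := by
    intro a b c
    rw [← hsq.P_cross a b]
    exact hP _ c
  refine ⟨hP, hC, fun a b c => ?_⟩
  rw [add_assoc, hC a b c, sub_eq_add_neg, ← neg_add_rev, neg_add_cancel]
end

section
/- Let C be a quadratic pair module. Then for every x ∈ C₀ the element P((x|x)_H) lies in h₁C = Ker(∂); it satisfies P((x+∂(c) | x+∂(c))_H) = P((x|x)_H) for every c ∈ C₁, P((x+y | x+y)_H) = P((x|x)_H) + P((y|y)_H) for all x,y ∈ C₀, and 2·P((x|x)_H) = 0. Hence x ↦ P((x|x)_H) induces a well-defined group homomorphism k: h₀C ⊗ ℤ/2 → h₁C (the k-invariant of C). -/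
/-- A quadratic pair module: groups `C0`, `C1`, an abelian group `Cee`, homomorphisms
`∂ : C1 → C0` and `P : Cee → C1` and a map `H : C0 → Cee` such that
`(C0, Cee, ∂∘P, H)` and `(C1, Cee, P, H∘∂)` are square groups. -/
structure QuadraticPairModule (C0 C1 Cee : Type*)
    [AddGroup C0] [AddGroup C1] [AddCommGroup Cee] where
  d : C1 →+ C0
  P : Cee →+ C1
  H : C0 → Cee
  sq0 : IsSquareGroup (d.comp P) H
  sq1 : IsSquareGroup P (H ∘ d)

namespace QuadraticPairModule

variable {C0 C1 Cee : Type*} [AddGroup C0] [AddGroup C1] [AddCommGroup Cee]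

/-- `H` measures the failure of symmetry of its cross effect on commutators. -/
lemma H_d_P_cross (C : QuadraticPairModule C0 C1 Cee) (a b : C0) :
    C.H (C.d (C.P (crossEff C.H a b))) = crossEff C.H a b - crossEff C.H b a := by
  have hcomm : C.d (C.P (crossEff C.H a b)) = -a - b + a + b := C.sq0.P_cross a b
  have hzero : crossEff C.H (b + a) (C.d (C.P (crossEff C.H a b))) = 0 :=
    C.sq0.cross_P_right (b + a) (crossEff C.H a b)
  have hsum : b + a + C.d (C.P (crossEff C.H a b)) = a + b := by
    rw [hcomm]
    simp [sub_eq_add_neg, add_assoc]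
  generalize C.d (C.P (crossEff C.H a b)) = z at hzero hsum ⊢
  unfold crossEff at hzero ⊢
  rw [hsum, sub_sub, sub_eq_zero] at hzero
  rw [hzero]
  abel

/-- `P` turns the cross effect of `H` into an antisymmetric pairing. -/
lemma P_cross_swap (C : QuadraticPairModule C0 C1 Cee) (a b : C0) :
    C.P (crossEff C.H b a) = -C.P (crossEff C.H a b) := by
  have h : C.P (C.H (C.d (C.P (crossEff C.H a b)))) =
      C.P (crossEff C.H a b) + C.P (crossEff C.H a b) := C.sq1.P_H_P _
  rw [C.H_d_P_cross, map_sub, sub_eq_add_neg] at h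
  rw [← add_left_cancel h, neg_neg]

lemma P_cross_self_add (C : QuadraticPairModule C0 C1 Cee) (x y : C0) :
    C.P (crossEff C.H (x + y) (x + y)) =
      C.P (crossEff C.H x x) + C.P (crossEff C.H y y) := by
  simp only [C.sq0.cross_add_left, C.sq0.cross_add_right, map_add, C.P_cross_swap x y]
  simp [add_assoc]

end QuadraticPairModule

/-- For a quadratic pair module `C`, the element `P((x|x)_H)` lies in
`h₁C = Ker ∂`, is invariant under changing `x` by a boundary `∂c`, is additive in the class
of `x`, and is 2-torsion.  Hence `x ↦ P((x|x)_H)` induces a well-defined group homomorphism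
`k : h₀C ⊗ ℤ/2 → h₁C`, the k-invariant of `C`. -/
theorem kInvariant_well_defined {C0 C1 Cee : Type*}
    [AddGroup C0] [AddGroup C1] [AddCommGroup Cee]
    (C : QuadraticPairModule C0 C1 Cee) :
    (∀ x : C0, C.d (C.P (crossEff C.H x x)) = 0) ∧
    (∀ (x : C0) (c : C1),
      C.P (crossEff C.H (x + C.d c) (x + C.d c)) = C.P (crossEff C.H x x)) ∧
    (∀ x y : C0,
      C.P (crossEff C.H (x + y) (x + y)) =
        C.P (crossEff C.H x x) + C.P (crossEff C.H y y)) ∧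
    (∀ x : C0, C.P (crossEff C.H x x) + C.P (crossEff C.H x x) = 0) := by
  refine ⟨fun x => ?_, fun x c => ?_, C.P_cross_self_add, fun x => ?_⟩
  · have h : C.d (C.P (crossEff C.H x x)) = -x - x + x + x := C.sq0.P_cross x x
    simp [h]
  · have hcross : crossEff C.H (C.d c) (C.d c) = crossEff (C.H ∘ C.d) c c := by
      simp [crossEff]
    have hc : C.P (crossEff C.H (C.d c) (C.d c)) = 0 := by
      rw [hcross, C.sq1.P_cross]
      simp
    rw [C.P_cross_self_add, hc, add_zero]
  · exact eq_neg_iff_add_eq_zero.mp (C.P_cross_swap x x)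
end

section
/- Let B be a pair algebra and let a,b,c ∈ h₀B be homogeneous of degrees p,q,r with a·b = 0 and b·c = 0. For any representatives ā ∈ B_{p,0}, b̄ ∈ B_{q,0}, c̄ ∈ B_{r,0} of a,b,c there exist e ∈ B_{p+q,1} and f ∈ B_{q+r,1} with ∂(e) = ā·b̄ and ∂(f) = b̄·c̄; for any such choices the element −e·c̄ + ā·f lies in h₁B_{p+q+r} = Ker(∂) in degree p+q+r; and the set ⟨a,b,c⟩ of all elements arising in this way from all choices of ā, b̄, c̄, e, f (the Massey product) is a coset of the subgroup (h₁B_{p+q})·c + a·(h₁B_{q+r}) of h₁B_{p+q+r}. -/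
/-!
Replacing `ā = a0 + ∂u`, `b̄ = b0 + ∂v`, `c̄ = c0 + ∂w` by `a0`, `b0`, `c0` does not change the
set of values of `−e·c̄ + ā·f`: if `∂e = ā·b̄` and `∂f = b̄·c̄`, then the corrected elements
`e₁ = e − u·b̄ − a0·v` and `f₁ = f − v·c0 − b̄·w` satisfy `∂e₁ = a0·b0`, `∂f₁ = b0·c0`, and the
relation `∂(x)·y = x·∂(y)` makes all correction terms cancel, so that
`−e·c̄ + ā·f = −e₁·c0 + a0·f₁` (`masseySet_normalize`).  With the representatives fixed, `e₁`
and `f₁` are determined exactly up to `Ker ∂`, which gives the coset description.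
-/

/-- An ℕ-graded pair algebra: an ℕ-graded ring `B_{*,0}` (given by the family `B0` with
degreewise-defined multiplication `mul`), an ℕ-graded `B_{*,0}`-bimodule `B_{*,1}` (the
family `B1` with actions `smul`, `smulr`) and a bimodule homomorphism `∂ : B_{*,1} → B_{*,0}`
satisfying `∂(a)·b = a·∂(b)`.  Multiplications are indexed by a proof `p + q = r` recording
the additivity of degrees. -/
structure PairAlgebra (B0 B1 : ℕ → Type*)
    [∀ n, AddCommGroup (B0 n)] [∀ n, AddCommGroup (B1 n)] where
  d : ∀ n, B1 n →+ B0 n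
  mul : ∀ {p q r : ℕ}, p + q = r → B0 p → B0 q → B0 r
  smul : ∀ {p q r : ℕ}, p + q = r → B0 p → B1 q → B1 r
  smulr : ∀ {p q r : ℕ}, p + q = r → B1 p → B0 q → B1 r
  one : B0 0
  mul_add : ∀ {p q r : ℕ} (h : p + q = r) (x : B0 p) (y y' : B0 q),
    mul h x (y + y') = mul h x y + mul h x y'
  add_mul : ∀ {p q r : ℕ} (h : p + q = r) (x x' : B0 p) (y : B0 q),
    mul h (x + x') y = mul h x y + mul h x' y
  smul_add : ∀ {p q r : ℕ} (h : p + q = r) (x : B0 p) (s s' : B1 q),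
    smul h x (s + s') = smul h x s + smul h x s'
  add_smul : ∀ {p q r : ℕ} (h : p + q = r) (x x' : B0 p) (s : B1 q),
    smul h (x + x') s = smul h x s + smul h x' s
  smulr_add : ∀ {p q r : ℕ} (h : p + q = r) (s : B1 p) (x x' : B0 q),
    smulr h s (x + x') = smulr h s x + smulr h s x'
  add_smulr : ∀ {p q r : ℕ} (h : p + q = r) (s s' : B1 p) (x : B0 q),
    smulr h (s + s') x = smulr h s x + smulr h s' x
  one_mul : ∀ {q : ℕ} (x : B0 q), mul (Nat.zero_add q) one x = x
  mul_one : ∀ {p : ℕ} (x : B0 p), mul rfl x one = x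
  one_smul : ∀ {q : ℕ} (s : B1 q), smul (Nat.zero_add q) one s = s
  smulr_one : ∀ {p : ℕ} (s : B1 p), smulr rfl s one = s
  mul_assoc : ∀ {p q r : ℕ} (x : B0 p) (y : B0 q) (z : B0 r),
    mul rfl (mul rfl x y) z = mul (Nat.add_assoc p q r).symm x (mul rfl y z)
  mul_smul_assoc : ∀ {p q r : ℕ} (x : B0 p) (y : B0 q) (s : B1 r),
    smul rfl (mul rfl x y) s = smul (Nat.add_assoc p q r).symm x (smul rfl y s)
  smul_smulr_assoc : ∀ {p q r : ℕ} (x : B0 p) (s : B1 q) (y : B0 r),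
    smulr rfl (smul rfl x s) y = smul (Nat.add_assoc p q r).symm x (smulr rfl s y)
  smulr_mul_assoc : ∀ {p q r : ℕ} (s : B1 p) (y : B0 q) (z : B0 r),
    smulr rfl (smulr rfl s y) z = smulr (Nat.add_assoc p q r).symm s (mul rfl y z)
  d_smul : ∀ {p q r : ℕ} (h : p + q = r) (x : B0 p) (s : B1 q),
    d r (smul h x s) = mul h x (d q s)
  d_smulr : ∀ {p q r : ℕ} (h : p + q = r) (s : B1 p) (x : B0 q),
    d r (smulr h s x) = mul h (d p s) x
  smul_d : ∀ {p q r : ℕ} (h : p + q = r) (s : B1 p) (t : B1 q),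
    smul h (d p s) t = smulr h s (d q t)

variable {B0 B1 : ℕ → Type*} [∀ n, AddCommGroup (B0 n)] [∀ n, AddCommGroup (B1 n)]

/-- The Massey product set `⟨a,b,c⟩ ⊆ B1 (p+q+r)` of the classes of `a0`, `b0`, `c0`:
all elements `−e·c̄ + ā·f` where `ā = a0 + ∂u`, `b̄ = b0 + ∂v`, `c̄ = c0 + ∂w` range over
representatives and `∂e = ā·b̄`, `∂f = b̄·c̄`. -/
def masseySet (A : PairAlgebra B0 B1) (p q r : ℕ)
    (a0 : B0 p) (b0 : B0 q) (c0 : B0 r) : Set (B1 (p + q + r)) :=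
  {z | ∃ (u : B1 p) (v : B1 q) (w : B1 r) (e : B1 (p + q)) (f : B1 (q + r)),
    A.d (p + q) e = A.mul rfl (a0 + A.d p u) (b0 + A.d q v) ∧
    A.d (q + r) f = A.mul rfl (b0 + A.d q v) (c0 + A.d r w) ∧
    z = -(A.smulr rfl e (c0 + A.d r w)) +
        A.smul (Nat.add_assoc p q r).symm (a0 + A.d p u) f}

/-- The indeterminacy subgroup `(h₁B_{p+q})·c + a·(h₁B_{q+r}) ⊆ h₁B_{p+q+r}`. -/
def indetSet (A : PairAlgebra B0 B1) (p q r : ℕ)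
    (a0 : B0 p) (c0 : B0 r) : Set (B1 (p + q + r)) :=
  {z | ∃ (s : B1 (p + q)) (t : B1 (q + r)),
    A.d (p + q) s = 0 ∧ A.d (q + r) t = 0 ∧
    z = A.smulr rfl s c0 + A.smul (Nat.add_assoc p q r).symm a0 t}

namespace PairAlgebra

variable (A : PairAlgebra B0 B1) {p q r : ℕ}

theorem smulr_sub_left (h : p + q = r) (s s' : B1 p) (x : B0 q) :
    A.smulr h (s - s') x = A.smulr h s x - A.smulr h s' x :=
  (AddMonoidHom.mk' (fun s => A.smulr h s x) fun s s' => A.add_smulr h s s' x).map_sub s s'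

theorem smul_sub_right (h : p + q = r) (x : B0 p) (s s' : B1 q) :
    A.smul h x (s - s') = A.smul h x s - A.smul h x s' :=
  (AddMonoidHom.mk' (fun s => A.smul h x s) fun s s' => A.smul_add h x s s').map_sub s s'

theorem smulr_zero_left (h : p + q = r) (x : B0 q) : A.smulr h (0 : B1 p) x = 0 := by
  simpa using A.smulr_sub_left h 0 0 x

theorem smul_zero_right (h : p + q = r) (x : B0 p) : A.smul h x (0 : B1 q) = 0 := by
  simpa using A.smul_sub_right h x 0 0

theorem smulr_neg_left (h : p + q = r) (s : B1 p) (x : B0 q) :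
    A.smulr h (-s) x = -A.smulr h s x := by
  simpa [A.smulr_zero_left] using A.smulr_sub_left h 0 s x

theorem smul_neg_right (h : p + q = r) (x : B0 p) (s : B1 q) :
    A.smul h x (-s) = -A.smul h x s := by
  simpa [A.smul_zero_right] using A.smul_sub_right h x 0 s

/-- Changing all three representatives does not change the value `−e·c̄ + ā·f`, provided `e` and
`f` are corrected accordingly. -/
theorem masseySet_normalize (a0 : B0 p) (b0 : B0 q) (c0 : B0 r)
    (u : B1 p) (v : B1 q) (w : B1 r) (e : B1 (p + q)) (f : B1 (q + r))
    (he : A.d (p + q) e = A.mul rfl (a0 + A.d p u) (b0 + A.d q v))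
    (hf : A.d (q + r) f = A.mul rfl (b0 + A.d q v) (c0 + A.d r w)) :
    ∃ (e₁ : B1 (p + q)) (f₁ : B1 (q + r)),
      A.d (p + q) e₁ = A.mul rfl a0 b0 ∧ A.d (q + r) f₁ = A.mul rfl b0 c0 ∧
      -(A.smulr rfl e (c0 + A.d r w)) + A.smul (Nat.add_assoc p q r).symm (a0 + A.d p u) f =
        -(A.smulr rfl e₁ c0) + A.smul (Nat.add_assoc p q r).symm a0 f₁ := by
  have hf₁ : A.d (q + r) (f - A.smulr rfl v c0 - A.smul rfl (b0 + A.d q v) w) =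
      A.mul rfl b0 c0 := by
    rw [map_sub, map_sub, hf, A.d_smulr, A.d_smul, A.mul_add, A.add_mul _ b0 _ c0]
    abel
  refine ⟨e - A.smulr rfl u (b0 + A.d q v) - A.smul rfl a0 v,
    f - A.smulr rfl v c0 - A.smul rfl (b0 + A.d q v) w, ?_, hf₁, ?_⟩
  · rw [map_sub, map_sub, he, A.d_smulr, A.d_smul, A.add_mul, A.mul_add _ a0]
    abel
  · -- `e·∂w = ∂e·w = ā·(b̄·w)`
    have h₁ : A.smulr rfl e (A.d r w) = A.smul (Nat.add_assoc p q r).symm (a0 + A.d p u)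
        (A.smul rfl (b0 + A.d q v) w) := by
      rw [← A.smul_d, he, A.mul_smul_assoc]
    -- `∂u·f₁ = u·∂f₁ = u·(b0·c0)`, with `f₁` expanded
    have h₂ := A.smul_d (Nat.add_assoc p q r).symm u
      (f - A.smulr rfl v c0 - A.smul rfl (b0 + A.d q v) w)
    rw [hf₁, A.smul_sub_right, A.smul_sub_right] at h₂
    -- `∂u·(v·c0) = u·(∂v·c0)`
    have h₃ := A.smul_d (Nat.add_assoc p q r).symm u (A.smulr rfl v c0)
    rw [A.d_smulr] at h₃
    rw [A.smulr_add, h₁]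
    simp only [A.smulr_sub_left, A.smul_sub_right, A.smulr_mul_assoc, A.smul_smulr_assoc,
      A.smulr_add, A.add_smulr, A.add_smul _ a0]
    rw [sub_eq_iff_eq_add, sub_eq_iff_eq_add, h₃] at h₂
    rw [h₂]
    abel

/-- The Massey product set computed with the fixed representatives `a0`, `b0`, `c0` only. -/
theorem mem_masseySet_iff (a0 : B0 p) (b0 : B0 q) (c0 : B0 r) (z : B1 (p + q + r)) :
    z ∈ masseySet A p q r a0 b0 c0 ↔ ∃ (e : B1 (p + q)) (f : B1 (q + r)),
      A.d (p + q) e = A.mul rfl a0 b0 ∧ A.d (q + r) f = A.mul rfl b0 c0 ∧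
      z = -(A.smulr rfl e c0) + A.smul (Nat.add_assoc p q r).symm a0 f := by
  constructor
  · rintro ⟨u, v, w, e, f, he, hf, rfl⟩
    exact A.masseySet_normalize a0 b0 c0 u v w e f he hf
  · rintro ⟨e, f, he, hf, rfl⟩
    exact ⟨0, 0, 0, e, f, by simpa using he, by simpa using hf, by simp⟩

end PairAlgebra

/-- For a pair algebra `B` and homogeneous classes `a`, `b`, `c` of degrees
`p`, `q`, `r` (represented by `a0`, `b0`, `c0`) with `a·b = 0` and `b·c = 0`: defining
elements `e`, `f` exist for arbitrary representatives; every resulting element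
`−e·c̄ + ā·f` lies in `h₁B_{p+q+r} = Ker ∂`; and the Massey product set is a coset of the
subgroup `(h₁B_{p+q})·c + a·(h₁B_{q+r})`. -/
theorem pairAlgebra_massey_coset (A : PairAlgebra B0 B1) (p q r : ℕ)
    (a0 : B0 p) (b0 : B0 q) (c0 : B0 r)
    (hab : ∃ e : B1 (p + q), A.d (p + q) e = A.mul rfl a0 b0)
    (hbc : ∃ f : B1 (q + r), A.d (q + r) f = A.mul rfl b0 c0) :
    (∀ (u : B1 p) (v : B1 q) (w : B1 r),
      ∃ (e : B1 (p + q)) (f : B1 (q + r)),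
        A.d (p + q) e = A.mul rfl (a0 + A.d p u) (b0 + A.d q v) ∧
        A.d (q + r) f = A.mul rfl (b0 + A.d q v) (c0 + A.d r w)) ∧
    (∀ z ∈ masseySet A p q r a0 b0 c0, A.d (p + q + r) z = 0) ∧
    (∃ S : AddSubgroup (B1 (p + q + r)),
      (S : Set (B1 (p + q + r))) = indetSet A p q r a0 c0) ∧
    (∃ g ∈ masseySet A p q r a0 b0 c0,
      masseySet A p q r a0 b0 c0 =
        {z | ∃ s ∈ indetSet A p q r a0 c0, z = g + s}) := by
  obtain ⟨e₀, he₀⟩ := hab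
  obtain ⟨f₀, hf₀⟩ := hbc
  refine ⟨fun u v w => ?_, fun z hz => ?_, ?_, ?_⟩
  · refine ⟨e₀ + A.smulr rfl u (b0 + A.d q v) + A.smul rfl a0 v,
      f₀ + A.smulr rfl v c0 + A.smul rfl (b0 + A.d q v) w, ?_, ?_⟩
    · rw [map_add, map_add, he₀, A.d_smulr, A.d_smul, A.add_mul, A.mul_add _ a0]
      abel
    · rw [map_add, map_add, hf₀, A.d_smulr, A.d_smul, A.mul_add _ _ c0, A.add_mul _ b0 _ c0]
  · obtain ⟨e, f, he, hf, rfl⟩ := (A.mem_masseySet_iff a0 b0 c0 z).1 hz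
    rw [map_add, map_neg, A.d_smulr, A.d_smul, he, hf, A.mul_assoc, neg_add_cancel]
  · refine ⟨{ carrier := indetSet A p q r a0 c0, add_mem' := ?_, zero_mem' := ?_,
              neg_mem' := ?_ }, rfl⟩
    · rintro _ _ ⟨s, t, hs, ht, rfl⟩ ⟨s', t', hs', ht', rfl⟩
      refine ⟨s + s', t + t', by simp [hs, hs'], by simp [ht, ht'], ?_⟩
      rw [A.add_smulr, A.smul_add]
      abel
    · exact ⟨0, 0, map_zero _, map_zero _, by simp [A.smulr_zero_left, A.smul_zero_right]⟩
    · rintro _ ⟨s, t, hs, ht, rfl⟩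
      refine ⟨-s, -t, by simp [hs], by simp [ht], ?_⟩
      rw [A.smulr_neg_left, A.smul_neg_right]
      abel
  · refine ⟨-(A.smulr rfl e₀ c0) + A.smul (Nat.add_assoc p q r).symm a0 f₀,
      (A.mem_masseySet_iff a0 b0 c0 _).2 ⟨e₀, f₀, he₀, hf₀, rfl⟩, ?_⟩
    ext z
    rw [A.mem_masseySet_iff]
    constructor
    · rintro ⟨e, f, he, hf, rfl⟩
      refine ⟨_, ⟨e₀ - e, f - f₀, by simp [he, he₀], by simp [hf, hf₀], rfl⟩, ?_⟩
      rw [A.smulr_sub_left, A.smul_sub_right]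
      abel
    · rintro ⟨_, ⟨s, t, hs, ht, rfl⟩, rfl⟩
      refine ⟨e₀ - s, f₀ + t, by simp [hs, he₀], by simp [ht, hf₀], ?_⟩
      rw [A.smulr_sub_left, A.smul_add]
      abel
end

section
/- Let C be an E∞-pair algebra, n ≥ 0, and a ∈ h₀C_{2n}. For any representative ā ∈ C_{2n,0} of a one has ∂(ā ⌣₁ ā) = 0, so ā ⌣₁ ā ∈ h₁C_{4n}; moreover this element is independent of the chosen representative: if ā and ā' both represent a, then ā ⌣₁ ā = ā' ⌣₁ ā' in h₁C_{4n}. (This element is the cup-one square Sq₁(a).) -/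
variable {B0 B1 : ℕ → Type*} [∀ n, AddCommGroup (B0 n)] [∀ n, AddCommGroup (B1 n)]

/-- A cup-one product turning the pair algebra `A` into an E∞-pair algebra: an additive
operation `⌣₁ : B_{p,0} ⊗ B_{q,0} → B_{p+q,1}` measuring the commutativity of `A` and
satisfying the four laws of an E∞-pair algebra. -/
structure EInftyCup (A : PairAlgebra B0 B1) where
  cup : ∀ {p q r : ℕ}, p + q = r → B0 p → B0 q → B1 r
  cup_add_left : ∀ {p q r : ℕ} (h : p + q = r) (x x' : B0 p) (y : B0 q),
    cup h (x + x') y = cup h x y + cup h x' y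
  cup_add_right : ∀ {p q r : ℕ} (h : p + q = r) (x : B0 p) (y y' : B0 q),
    cup h x (y + y') = cup h x y + cup h x y'
  cup_comm_mul : ∀ {p q r : ℕ} (h : p + q = r) (x₁ : B0 p) (x₂ : B0 q),
    ((-1 : ℤ) ^ (p * q)) • A.mul ((Nat.add_comm q p).trans h) x₂ x₁ + A.d r (cup h x₁ x₂)
      = A.mul h x₁ x₂
  cup_d : ∀ {p q r : ℕ} (h : p + q = r) (s : B1 p) (x₂ : B0 q),
    ((-1 : ℤ) ^ (p * q)) • A.smul ((Nat.add_comm q p).trans h) x₂ s + cup h (A.d p s) x₂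
      = A.smulr h s x₂
  cup_skew : ∀ {p q r : ℕ} (h : p + q = r) (x₁ : B0 p) (x₂ : B0 q),
    ((-1 : ℤ) ^ (p * q)) • cup ((Nat.add_comm q p).trans h) x₂ x₁ + cup h x₁ x₂ = 0
  cup_mul : ∀ {p q r : ℕ} (x₁ : B0 p) (x₂ : B0 q) (x₃ : B0 r),
    cup rfl (A.mul rfl x₁ x₂) x₃
      = ((-1 : ℤ) ^ (q * r)) •
          A.smulr (by omega : p + r + q = p + q + r) (cup rfl x₁ x₃) x₂
        + A.smul (by omega : p + (q + r) = p + q + r) x₁ (cup rfl x₂ x₃)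

/-- In an E∞-pair algebra `C`, for `a ∈ h₀C_{2n}` represented by
`ā ∈ C_{2n,0}` one has `∂(ā ⌣₁ ā) = 0`, so `ā ⌣₁ ā ∈ h₁C_{4n}`, and this element does not
depend on the chosen representative of `a`: this is the cup-one square `Sq₁(a)`. -/
theorem eInftyPairAlgebra_cup_one_square (A : PairAlgebra B0 B1) (cupd : EInftyCup A)
    (n : ℕ) :
    (∀ ab : B0 (2 * n), A.d (2 * n + 2 * n) (cupd.cup rfl ab ab) = 0) ∧
    (∀ (ab : B0 (2 * n)) (c : B1 (2 * n)),
      cupd.cup rfl (ab + A.d (2 * n) c) (ab + A.d (2 * n) c) = cupd.cup rfl ab ab) := by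
  -- in even degrees all the signs are trivial
  have hs : ((-1 : ℤ) ^ (2 * n * (2 * n))) = 1 :=
    Even.neg_one_pow ⟨n * (2 * n), by ring⟩
  refine ⟨fun ab => ?_, fun ab c => ?_⟩
  · have h := cupd.cup_comm_mul rfl ab ab
    rw [hs, _root_.one_smul] at h
    exact left_eq_add.mp h.symm
  · have hcross := cupd.cup_skew rfl ab (A.d (2 * n) c)
    rw [hs, _root_.one_smul] at hcross
    have hdd := cupd.cup_d rfl c (A.d (2 * n) c)
    rw [hs, _root_.one_smul, A.smul_d] at hdd
    have hzero := left_eq_add.mp hdd.symm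
    rw [cupd.cup_add_left, cupd.cup_add_right, cupd.cup_add_right, hzero, add_zero,
      add_assoc, add_comm (cupd.cup rfl ab (A.d (2 * n) c)), hcross, add_zero]
end

section
/- Let C be an E∞-pair algebra, B a C-algebra with unit u: C → B, and let x ∈ C_{n,0}, y ∈ B_{n,1} with ∂(y) = u₀(x). Then for every homogeneous a ∈ h₀B of degree |a| with representative ā ∈ B_{|a|,0}, the element θ_{(x,y)}(a) := −y·ā + (−1)^{n·|a|} ā·y + x ⌣₁ ā lies in h₁B = Ker(∂), is independent of the choice of the representative ā, and the resulting map θ_{(x,y)}: h₀B → h₁B is additive and a degree-n derivation: θ_{(x,y)}(a·b) = θ_{(x,y)}(a)·b + (−1)^{n·|a|} a·θ_{(x,y)}(b); moreover θ_{(x,y)} vanishes on the image of h₀u: h₀C → h₀B (hence is h₀C-linear). -/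
variable {B0 B1 : ℕ → Type*} [∀ n, AddCommGroup (B0 n)] [∀ n, AddCommGroup (B1 n)]

variable {C0 C1 A0 A1 : ℕ → Type*}
variable [∀ n, AddCommGroup (C0 n)] [∀ n, AddCommGroup (C1 n)]
variable [∀ n, AddCommGroup (A0 n)] [∀ n, AddCommGroup (A1 n)]

/-- An algebra `B` over an E∞-pair algebra `(C, Ccup)`: a pair algebra `B` together with a
unit morphism `u : C → B` of pair algebras and external cup-one products
`⌣₁ : B_{n,0} × C_{m,0} → B_{n+m,1}` (`cupBC`) and `⌣₁ : C_{n,0} × B_{m,0} → B_{n+m,1}`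
(`cupCB`), additive in each variable, satisfying the seven compatibility laws. -/
structure CAlgebra (C : PairAlgebra C0 C1) (Ccup : EInftyCup C)
    (B : PairAlgebra A0 A1) where
  u0 : ∀ n, C0 n →+ A0 n
  u1 : ∀ n, C1 n →+ A1 n
  u_d : ∀ (n : ℕ) (s : C1 n), B.d n (u1 n s) = u0 n (C.d n s)
  u0_one : u0 0 C.one = B.one
  u0_mul : ∀ {p q r : ℕ} (h : p + q = r) (x : C0 p) (y : C0 q),
    u0 r (C.mul h x y) = B.mul h (u0 p x) (u0 q y)
  u1_smul : ∀ {p q r : ℕ} (h : p + q = r) (x : C0 p) (s : C1 q),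
    u1 r (C.smul h x s) = B.smul h (u0 p x) (u1 q s)
  u1_smulr : ∀ {p q r : ℕ} (h : p + q = r) (s : C1 p) (x : C0 q),
    u1 r (C.smulr h s x) = B.smulr h (u1 p s) (u0 q x)
  cupBC : ∀ {p q r : ℕ}, p + q = r → A0 p → C0 q → A1 r
  cupCB : ∀ {p q r : ℕ}, p + q = r → C0 p → A0 q → A1 r
  cupBC_add_left : ∀ {p q r : ℕ} (h : p + q = r) (x x' : A0 p) (y : C0 q),
    cupBC h (x + x') y = cupBC h x y + cupBC h x' y
  cupBC_add_right : ∀ {p q r : ℕ} (h : p + q = r) (x : A0 p) (y y' : C0 q),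
    cupBC h x (y + y') = cupBC h x y + cupBC h x y'
  cupCB_add_left : ∀ {p q r : ℕ} (h : p + q = r) (x x' : C0 p) (y : A0 q),
    cupCB h (x + x') y = cupCB h x y + cupCB h x' y
  cupCB_add_right : ∀ {p q r : ℕ} (h : p + q = r) (x : C0 p) (y y' : A0 q),
    cupCB h x (y + y') = cupCB h x y + cupCB h x y'
  -- u₁(x̃₁ ⌣₁ x̃₂) = u₀(x̃₁) ⌣₁ x̃₂ = x̃₁ ⌣₁ u₀(x̃₂)
  u_cup_BC : ∀ {p q r : ℕ} (h : p + q = r) (x : C0 p) (y : C0 q),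
    u1 r (Ccup.cup h x y) = cupBC h (u0 p x) y
  u_cup_CB : ∀ {p q r : ℕ} (h : p + q = r) (x : C0 p) (y : C0 q),
    u1 r (Ccup.cup h x y) = cupCB h x (u0 q y)
  -- (−1)^{pq} x₂·u₀(x̃₁) + ∂(x̃₁ ⌣₁ x₂) = u₀(x̃₁)·x₂
  loes : ∀ {p q r : ℕ} (h : p + q = r) (xt : C0 p) (x : A0 q),
    ((-1 : ℤ) ^ (p * q)) • B.mul ((Nat.add_comm q p).trans h) x (u0 p xt)
      + B.d r (cupCB h xt x) = B.mul h (u0 p xt) x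
  -- (−1)^{pq} u₀(x̃₂)·s + ∂(s) ⌣₁ x̃₂ = s·u₀(x̃₂)
  biende : ∀ {p q r : ℕ} (h : p + q = r) (s : A1 p) (xt : C0 q),
    ((-1 : ℤ) ^ (p * q)) • B.smul ((Nat.add_comm q p).trans h) (u0 q xt) s
      + cupBC h (B.d p s) xt = B.smulr h s (u0 q xt)
  -- (−1)^{pq} x₂·u₁(s̃) + ∂(s̃) ⌣₁ x₂ = u₁(s̃)·x₂
  node : ∀ {p q r : ℕ} (h : p + q = r) (st : C1 p) (x : A0 q),
    ((-1 : ℤ) ^ (p * q)) • B.smul ((Nat.add_comm q p).trans h) x (u1 p st)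
      + cupCB h (C.d p st) x = B.smulr h (u1 p st) x
  -- (−1)^{pq} x₂ ⌣₁ x̃₁ + x̃₁ ⌣₁ x₂ = 0
  comi : ∀ {p q r : ℕ} (h : p + q = r) (xt : C0 p) (x : A0 q),
    ((-1 : ℤ) ^ (p * q)) • cupBC ((Nat.add_comm q p).trans h) x xt + cupCB h xt x = 0
  -- (x̃₁·x̃₂) ⌣₁ x₃ = (−1)^{qr} (x̃₁ ⌣₁ x₃)·u₀(x̃₂) + u₀(x̃₁)·(x̃₂ ⌣₁ x₃)
  otrolin : ∀ {p q r : ℕ} (x₁ : C0 p) (x₂ : C0 q) (x₃ : A0 r),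
    cupCB rfl (C.mul rfl x₁ x₂) x₃
      = ((-1 : ℤ) ^ (q * r)) •
          B.smulr (by omega : p + r + q = p + q + r) (cupCB rfl x₁ x₃) (u0 q x₂)
        + B.smul (by omega : p + (q + r) = p + q + r) (u0 p x₁) (cupCB rfl x₂ x₃)
  -- (x₁·x₂) ⌣₁ x̃₃ = (−1)^{qr} (x₁ ⌣₁ x̃₃)·x₂ + x₁·(x₂ ⌣₁ x̃₃)
  isder : ∀ {p q r : ℕ} (x₁ : A0 p) (x₂ : A0 q) (x₃ : C0 r),
    cupBC rfl (B.mul rfl x₁ x₂) x₃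
      = ((-1 : ℤ) ^ (q * r)) •
          B.smulr (by omega : p + r + q = p + q + r) (cupBC rfl x₁ x₃) x₂
        + B.smul (by omega : p + (q + r) = p + q + r) x₁ (cupBC rfl x₂ x₃)

variable {C : PairAlgebra C0 C1} {Ccup : EInftyCup C} {B : PairAlgebra A0 A1}

/-- The map `θ_{(x,y)}` on representatives:
`θ_{(x,y)}(ā) = −y·ā + (−1)^{n·|ā|} ā·y + x ⌣₁ ā`. -/
def theta (CA : CAlgebra C Ccup B) (n : ℕ) (x : C0 n) (y : A1 n)
    (k : ℕ) (ab : A0 k) : A1 (n + k) :=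
  -(B.smulr rfl y ab) + ((-1 : ℤ) ^ (n * k)) • B.smul (Nat.add_comm k n) ab y
    + CA.cupCB rfl x ab

namespace PairAlgebra

variable {p q r pq qr t : ℕ}

lemma mul_smul_assoc' (B : PairAlgebra A0 A1) (h₁ : p + q = pq) (h₂ : pq + r = t)
    (h₃ : q + r = qr) (h₄ : p + qr = t) (x : A0 p) (y : A0 q) (s : A1 r) :
    B.smul h₂ (B.mul h₁ x y) s = B.smul h₄ x (B.smul h₃ y s) := by
  subst h₁ h₃ h₂
  exact B.mul_smul_assoc x y s

lemma smul_smulr_assoc' (B : PairAlgebra A0 A1) (h₁ : p + q = pq) (h₂ : pq + r = t)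
    (h₃ : q + r = qr) (h₄ : p + qr = t) (x : A0 p) (s : A1 q) (y : A0 r) :
    B.smulr h₂ (B.smul h₁ x s) y = B.smul h₄ x (B.smulr h₃ s y) := by
  subst h₁ h₃ h₂
  exact B.smul_smulr_assoc x s y

lemma smulr_mul_assoc' (B : PairAlgebra A0 A1) (h₁ : p + q = pq) (h₂ : pq + r = t)
    (h₃ : q + r = qr) (h₄ : p + qr = t) (s : A1 p) (y : A0 q) (z : A0 r) :
    B.smulr h₂ (B.smulr h₁ s y) z = B.smulr h₄ s (B.mul h₃ y z) := by
  subst h₁ h₃ h₂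
  exact B.smulr_mul_assoc s y z

/-- Left multiplication by `x`, as an additive homomorphism. -/
def smulHom (B : PairAlgebra A0 A1) (h : p + q = r) (x : A0 p) : A1 q →+ A1 r :=
  AddMonoidHom.mk' (B.smul h x) (B.smul_add h x)

/-- Right multiplication by `x`, as an additive homomorphism. -/
def smulrHom (B : PairAlgebra A0 A1) (h : p + q = r) (x : A0 q) : A1 p →+ A1 r :=
  AddMonoidHom.mk' (fun s => B.smulr h s x) (fun s s' => B.add_smulr h s s' x)

lemma smul_neg (B : PairAlgebra A0 A1) (h : p + q = r) (x : A0 p) (s : A1 q) :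
    B.smul h x (-s) = -B.smul h x s := map_neg (B.smulHom h x) s

lemma smul_zsmul (B : PairAlgebra A0 A1) (h : p + q = r) (x : A0 p) (m : ℤ) (s : A1 q) :
    B.smul h x (m • s) = m • B.smul h x s := map_zsmul (B.smulHom h x) m s

lemma neg_smulr (B : PairAlgebra A0 A1) (h : p + q = r) (s : A1 p) (x : A0 q) :
    B.smulr h (-s) x = -B.smulr h s x := map_neg (B.smulrHom h x) s

lemma zsmul_smulr (B : PairAlgebra A0 A1) (h : p + q = r) (m : ℤ) (s : A1 p) (x : A0 q) :
    B.smulr h (m • s) x = m • B.smulr h s x := map_zsmul (B.smulrHom h x) m s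

end PairAlgebra

namespace CAlgebra

lemma cupCB_eq (CA : CAlgebra C Ccup B) {p q r : ℕ} (h : p + q = r) (h' : q + p = r)
    (x : C0 p) (a : A0 q) :
    CA.cupCB h x a = -(((-1 : ℤ) ^ (p * q)) • CA.cupBC h' a x) :=
  eq_neg_of_add_eq_zero_right (CA.comi h x a)

lemma cupBC_eq (CA : CAlgebra C Ccup B) {p q r : ℕ} (h : p + q = r) (h' : q + p = r)
    (a : A0 p) (x : C0 q) :
    CA.cupBC h a x = -(((-1 : ℤ) ^ (q * p)) • CA.cupCB h' x a) := by
  rw [CA.cupCB_eq h' h, _root_.smul_neg, smul_smul, ← mul_pow]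
  simp

lemma isder' (CA : CAlgebra C Ccup B) {p q r pq pr qr t : ℕ} (h₁ : p + q = pq)
    (h₂ : pq + r = t) (h₃ : p + r = pr) (h₄ : pr + q = t) (h₅ : q + r = qr) (h₆ : p + qr = t)
    (a : A0 p) (b : A0 q) (x : C0 r) :
    CA.cupBC h₂ (B.mul h₁ a b) x
      = ((-1 : ℤ) ^ (q * r)) • B.smulr h₄ (CA.cupBC h₃ a x) b
        + B.smul h₆ a (CA.cupBC h₅ b x) := by
  subst h₁ h₃ h₅ h₂
  exact CA.isder a b x

/-- The operation `x ⌣₁ -` is a derivation of degree `|x|`. -/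
lemma cupCB_mul (CA : CAlgebra C Ccup B) {n k k' : ℕ}
    (h₁ : n + k + k' = n + (k + k')) (h₂ : k + (n + k') = n + (k + k'))
    (x : C0 n) (a : A0 k) (b : A0 k') :
    CA.cupCB rfl x (B.mul rfl a b)
      = B.smulr h₁ (CA.cupCB rfl x a) b
        + ((-1 : ℤ) ^ (n * k)) •
          B.smul h₂ a (CA.cupCB rfl x b) := by
  rw [CA.cupCB_eq rfl (Nat.add_comm (k + k') n),
    CA.isder' rfl (Nat.add_comm (k + k') n) (Nat.add_comm k n) h₁ (Nat.add_comm k' n) h₂,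
    CA.cupBC_eq (Nat.add_comm _ _) rfl a x, CA.cupBC_eq (Nat.add_comm _ _) rfl b x,
    B.neg_smulr, B.zsmul_smulr, B.smul_neg, B.smul_zsmul]
  rcases neg_one_pow_eq_or ℤ (n * k) with h | h <;>
  rcases neg_one_pow_eq_or ℤ (n * k') with h' | h' <;>
  simp [Nat.mul_add, pow_add, Nat.mul_comm k' n, h, h', add_comm]

end CAlgebra

lemma theta_add (CA : CAlgebra C Ccup B) (n : ℕ) (x : C0 n) (y : A1 n) (k : ℕ)
    (a a' : A0 k) :
    theta CA n x y k (a + a') = theta CA n x y k a + theta CA n x y k a' := by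
  simp only [theta, B.smulr_add, B.add_smul, CA.cupCB_add_right, smul_add]
  abel

lemma theta_d (CA : CAlgebra C Ccup B) (n : ℕ) (x : C0 n) (y : A1 n)
    (hyx : B.d n y = CA.u0 n x) (k : ℕ) (c : A1 k) :
    theta CA n x y k (B.d k c) = 0 := by
  have h := CA.biende (Nat.add_comm k n) c x
  rw [← hyx, B.smul_d, ← B.smul_d (Nat.add_comm k n)] at h
  rw [theta, CA.cupCB_eq rfl (Nat.add_comm k n), ← h, Nat.mul_comm k n, smul_add, smul_smul,
    ← mul_pow]
  simp

lemma theta_mul (CA : CAlgebra C Ccup B) (n : ℕ) (x : C0 n) (y : A1 n) (k k' : ℕ)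
    (h₁ : n + k + k' = n + (k + k')) (h₂ : k + (n + k') = n + (k + k'))
    (a : A0 k) (b : A0 k') :
    theta CA n x y (k + k') (B.mul rfl a b)
      = B.smulr h₁ (theta CA n x y k a) b
        + ((-1 : ℤ) ^ (n * k)) •
          B.smul h₂ a (theta CA n x y k' b) := by
  simp only [theta, CA.cupCB_mul h₁ h₂, B.add_smulr, B.smul_add, B.neg_smulr, B.zsmul_smulr,
    B.smul_neg, B.smul_zsmul]
  rw [B.smulr_mul_assoc' rfl h₁ rfl rfl,
    B.smul_smulr_assoc' (Nat.add_comm k n) h₁ rfl h₂,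
    B.mul_smul_assoc' rfl (Nat.add_comm (k + k') n) (Nat.add_comm k' n) h₂,
    Nat.mul_add, pow_add, mul_smul]
  simp only [smul_add, _root_.smul_neg]
  abel

/-- For a `C`-algebra `B` with unit `u`, `x ∈ C_{n,0}` and `y ∈ B_{n,1}` with
`∂y = u₀(x)`, the element `θ_{(x,y)}(ā) = −y·ā + (−1)^{n|a|}ā·y + x ⌣₁ ā` lies in
`h₁B = Ker ∂`, is independent of the representative `ā`, is additive, is a degree-`n`
derivation, and vanishes on the image of `h₀u` (hence is `h₀C`-linear). -/
theorem cAlgebra_theta_derivation (CA : CAlgebra C Ccup B) (n : ℕ)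
    (x : C0 n) (y : A1 n) (hyx : B.d n y = CA.u0 n x) :
    (∀ (k : ℕ) (ab : A0 k), B.d (n + k) (theta CA n x y k ab) = 0) ∧
    (∀ (k : ℕ) (ab : A0 k) (c : A1 k),
      theta CA n x y k (ab + B.d k c) = theta CA n x y k ab) ∧
    (∀ (k : ℕ) (ab ab' : A0 k),
      theta CA n x y k (ab + ab') = theta CA n x y k ab + theta CA n x y k ab') ∧
    (∀ (k k' : ℕ) (ab : A0 k) (bb : A0 k'),
      theta CA n x y (k + k') (B.mul rfl ab bb)
        = B.smulr (by omega : n + k + k' = n + (k + k')) (theta CA n x y k ab) bb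
          + ((-1 : ℤ) ^ (n * k)) •
            B.smul (by omega : k + (n + k') = n + (k + k')) ab (theta CA n x y k' bb)) ∧
    (∀ (k : ℕ) (xt : C0 k), theta CA n x y k (CA.u0 k xt) = 0) := by
  refine ⟨fun k a => ?_, fun k a c => ?_, theta_add CA n x y, fun k k' => theta_mul CA n x y k k' _ _,
    fun k xt => ?_⟩
  · have h := CA.loes rfl x a
    rw [theta, map_add, map_add, map_neg, map_zsmul, B.d_smulr, B.d_smul, hyx, ← h]
    abel
  · rw [theta_add, theta_d CA n x y hyx, add_zero]
  · rw [theta, ← CA.u_cup_CB, CA.u_cup_BC, ← hyx, ← CA.biende rfl y xt]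
    abel
end

section
/- Let B be a quadratic pair algebra and α ∈ h₀B_n with 2α = 0. Then the Massey product ⟨2, α, 2⟩ ⊆ h₁B_n is defined (where 2 ∈ h₀B₀ is the class of 1+1, so 2·α = 0 = α·2), and the k-invariant of the quadratic pair module B_{n,*} satisfies k(α) = P((a|a)_H) ∈ ⟨2, α, 2⟩ for any representative a ∈ B_{n,0} of α. -/
/-- A quadratic pair algebra: an ℕ-graded quadratic pair module `{B_{n,*}}` together with
multiplications on levels 0, 1 and ee (indexed by a proof `p + q = r` recording degrees),
a unit `1 ∈ B_{0,0}` with `H(1) = 0` (whose cross-square `(1|1)_H` is a unit for the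
ee-multiplication), satisfying associativity, right linearity, left distributivity with
quadratic correction terms, and the compatibility laws with `∂`, `P` and `H`. -/
structure QuadraticPairAlgebra (B0 B1 Bee : ℕ → Type*)
    [∀ n, AddGroup (B0 n)] [∀ n, AddGroup (B1 n)] [∀ n, AddCommGroup (Bee n)] where
  d : ∀ n, B1 n →+ B0 n
  P : ∀ n, Bee n →+ B1 n
  H : ∀ n, B0 n → Bee n
  sq0 : ∀ n, IsSquareGroup ((d n).comp (P n)) (H n)
  sq1 : ∀ n, IsSquareGroup (P n) (H n ∘ d n)
  mul : ∀ {p q r : ℕ}, p + q = r → B0 p → B0 q → B0 r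
  smul : ∀ {p q r : ℕ}, p + q = r → B0 p → B1 q → B1 r
  smulr : ∀ {p q r : ℕ}, p + q = r → B1 p → B0 q → B1 r
  mulee : ∀ {p q r : ℕ}, p + q = r → Bee p → Bee q → Bee r
  one : B0 0
  H_one : H 0 one = 0
  one_mul : ∀ {q : ℕ} (x : B0 q), mul (Nat.zero_add q) one x = x
  mul_one : ∀ {p : ℕ} (x : B0 p), mul rfl x one = x
  one_smul : ∀ {q : ℕ} (s : B1 q), smul (Nat.zero_add q) one s = s
  smulr_one : ∀ {p : ℕ} (s : B1 p), smulr rfl s one = s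
  crossone_mulee : ∀ {q : ℕ} (a : Bee q),
    mulee (Nat.zero_add q) (crossEff (H 0) one one) a = a
  mulee_crossone : ∀ {p : ℕ} (a : Bee p),
    mulee rfl a (crossEff (H 0) one one) = a
  mul_assoc : ∀ {p q r : ℕ} (x : B0 p) (y : B0 q) (z : B0 r),
    mul rfl (mul rfl x y) z = mul (Nat.add_assoc p q r).symm x (mul rfl y z)
  mul_smul_assoc : ∀ {p q r : ℕ} (x : B0 p) (y : B0 q) (s : B1 r),
    smul rfl (mul rfl x y) s = smul (Nat.add_assoc p q r).symm x (smul rfl y s)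
  smul_smulr_assoc : ∀ {p q r : ℕ} (x : B0 p) (s : B1 q) (y : B0 r),
    smulr rfl (smul rfl x s) y = smul (Nat.add_assoc p q r).symm x (smulr rfl s y)
  smulr_mul_assoc : ∀ {p q r : ℕ} (s : B1 p) (y : B0 q) (z : B0 r),
    smulr rfl (smulr rfl s y) z = smulr (Nat.add_assoc p q r).symm s (mul rfl y z)
  mulee_assoc : ∀ {p q r : ℕ} (a : Bee p) (b : Bee q) (c : Bee r),
    mulee rfl (mulee rfl a b) c = mulee (Nat.add_assoc p q r).symm a (mulee rfl b c)
  -- right linearity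
  mul_add : ∀ {p q r : ℕ} (h : p + q = r) (x : B0 p) (y y' : B0 q),
    mul h x (y + y') = mul h x y + mul h x y'
  smul_add : ∀ {p q r : ℕ} (h : p + q = r) (x : B0 p) (s s' : B1 q),
    smul h x (s + s') = smul h x s + smul h x s'
  smulr_add : ∀ {p q r : ℕ} (h : p + q = r) (s : B1 p) (x x' : B0 q),
    smulr h s (x + x') = smulr h s x + smulr h s x'
  mulee_add : ∀ {p q r : ℕ} (h : p + q = r) (a : Bee p) (b b' : Bee q),
    mulee h a (b + b') = mulee h a b + mulee h a b'
  -- left distributivity with quadratic corrections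
  add_mul : ∀ {p q r : ℕ} (h : p + q = r) (x₁ x₂ : B0 p) (x₃ : B0 q),
    mul h (x₁ + x₂) x₃ = mul h x₁ x₃ + mul h x₂ x₃
      + d r (P r (mulee h (crossEff (H p) x₂ x₁) (H q x₃)))
  add_smul : ∀ {p q r : ℕ} (h : p + q = r) (x₁ x₂ : B0 p) (s : B1 q),
    smul h (x₁ + x₂) s = smul h x₁ s + smul h x₂ s
      + P r (mulee h (crossEff (H p) x₂ x₁) (H q (d q s)))
  add_smulr : ∀ {p q r : ℕ} (h : p + q = r) (s₁ s₂ : B1 p) (x : B0 q),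
    smulr h (s₁ + s₂) x = smulr h s₁ x + smulr h s₂ x
      + P r (mulee h (crossEff (H p) (d p s₂) (d p s₁)) (H q x))
  add_mulee : ∀ {p q r : ℕ} (h : p + q = r) (a₁ a₂ : Bee p) (a₃ : Bee q),
    mulee h (a₁ + a₂) a₃ = mulee h a₁ a₃ + mulee h a₂ a₃
  -- compatibility of ∂ with the multiplications
  d_smul : ∀ {p q r : ℕ} (h : p + q = r) (x : B0 p) (s : B1 q),
    d r (smul h x s) = mul h x (d q s)
  d_smulr : ∀ {p q r : ℕ} (h : p + q = r) (s : B1 p) (x : B0 q),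
    d r (smulr h s x) = mul h (d p s) x
  smul_d : ∀ {p q r : ℕ} (h : p + q = r) (s : B1 p) (t : B1 q),
    smul h (d p s) t = smulr h s (d q t)
  -- compatibility with P, H, Δ and the cross effect
  P_cross_mulee : ∀ {p q r : ℕ} (h : p + q = r) (x : B0 p) (a : Bee q),
    P r (mulee h (crossEff (H p) x x) a) = smul h x (P q a)
  P_mulee_delta : ∀ {p q r : ℕ} (h : p + q = r) (a : Bee p) (x : B0 q),
    P r (mulee h a
      (crossEff (H q) x x - H q x + (H q (d q (P q (H q x))) - H q x)))
      = smulr h (P p a) x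
  H_mul : ∀ {p q r : ℕ} (h : p + q = r) (x₁ : B0 p) (x₂ : B0 q),
    H r (mul h x₁ x₂) = mulee h (crossEff (H p) x₁ x₁) (H q x₂)
      + mulee h (H p x₁)
          (crossEff (H q) x₂ x₂ - H q x₂ + (H q (d q (P q (H q x₂))) - H q x₂))
  HdP_mulee : ∀ {p q r : ℕ} (h : p + q = r) (a₁ : Bee p) (a₂ : Bee q),
    H r (d r (P r (mulee h a₁ a₂)))
      = mulee h (H p (d p (P p a₁))) a₂ + mulee h a₁ (H q (d q (P q a₂)))
        - mulee h (H p (d p (P p a₁))) (H q (d q (P q a₂)))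
  cross_mul : ∀ {p q r : ℕ} (h : p + q = r) (x₁ x₃ : B0 p) (x₂ x₄ : B0 q),
    crossEff (H r) (mul h x₁ x₂) (mul h x₃ x₄)
      = mulee h (crossEff (H p) x₁ x₃) (crossEff (H q) x₂ x₄)

variable {B0 B1 Bee : ℕ → Type*}
  [∀ n, AddGroup (B0 n)] [∀ n, AddGroup (B1 n)] [∀ n, AddCommGroup (Bee n)]

/-- The Massey product set `⟨2, α, 2⟩ ⊆ B1 n`, where `2 ∈ h₀B₀` is the class of `1+1` and
`α ∈ h₀B_n` is the class of `a` (with `2α = 0`): all elements `−e·c̄ + ā·f` where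
`ā = 1+1+∂u`, `b̄ = a+∂v`, `c̄ = 1+1+∂w` range over representatives and
`∂e = ā·b̄`, `∂f = b̄·c̄`. -/
def massey2a2 (A : QuadraticPairAlgebra B0 B1 Bee) (n : ℕ) (a : B0 n) : Set (B1 n) :=
  {z | ∃ (u w : B1 0) (v : B1 n) (e f : B1 n),
    A.d n e = A.mul (Nat.zero_add n) (A.one + A.one + A.d 0 u) (a + A.d n v) ∧
    A.d n f = A.mul (Nat.add_zero n) (a + A.d n v) (A.one + A.one + A.d 0 w) ∧
    z = -(A.smulr (Nat.add_zero n) e (A.one + A.one + A.d 0 w)) +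
        A.smul (Nat.zero_add n) (A.one + A.one + A.d 0 u) f}

namespace QuadraticPairAlgebra

variable (A : QuadraticPairAlgebra B0 B1 Bee)

/-- Associativity on level `0` with arbitrary proofs of the degree equations. -/
lemma mul_assoc_of_eq {p q r pq qr s : ℕ} (h₁ : p + q = pq) (h₂ : pq + r = s) (h₃ : q + r = qr)
    (h₄ : p + qr = s) (x : B0 p) (y : B0 q) (z : B0 r) :
    A.mul h₂ (A.mul h₁ x y) z = A.mul h₄ x (A.mul h₃ y z) := by
  subst h₁ h₃ h₂
  exact A.mul_assoc x y z

lemma add_eq_add_dP_cross {n : ℕ} (x y : B0 n) :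
    x + y = y + x + A.d n (A.P n (crossEff (A.H n) x y)) := by
  have h : A.d n (A.P n (crossEff (A.H n) x y)) = -x - y + x + y := (A.sq0 n).P_cross x y
  rw [h]
  simp [sub_eq_add_neg, add_assoc]

/-- Values of `P` are central in level `1`, as their cross effects vanish. -/
lemma P_add_comm {n : ℕ} (x : Bee n) (s : B1 n) : A.P n x + s = s + A.P n x := by
  have h := (A.sq1 n).P_cross (A.P n x) s
  rw [(A.sq1 n).cross_P_left, map_zero] at h
  have h' : s + A.P n x + 0 = s + A.P n x + (-A.P n x - s + A.P n x + s) := by rw [← h]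
  simpa [sub_eq_add_neg, add_assoc] using h'.symm

lemma mul_two {n : ℕ} (b : B0 n) : A.mul (Nat.add_zero n) b (A.one + A.one) = b + b := by
  rw [A.mul_add]
  exact congrArg₂ (· + ·) (A.mul_one b) (A.mul_one b)

lemma smulr_two {n : ℕ} (s : B1 n) : A.smulr (Nat.add_zero n) s (A.one + A.one) = s + s := by
  rw [A.smulr_add]
  exact congrArg₂ (· + ·) (A.smulr_one s) (A.smulr_one s)

lemma two_mul {n : ℕ} (b : B0 n) :
    A.mul (Nat.zero_add n) (A.one + A.one) b = b + b + A.d n (A.P n (A.H n b)) := by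
  rw [A.add_mul, A.one_mul, A.crossone_mulee]

lemma two_smul {n : ℕ} (s : B1 n) :
    A.smul (Nat.zero_add n) (A.one + A.one) s = s + s + A.P n (A.H n (A.d n s)) := by
  rw [A.add_smul, A.one_smul, A.crossone_mulee]

/-- The condition `2α = 0` does not depend on the representative of `α`. -/
lemma exists_add_self_eq_d {n : ℕ} {a : B0 n} (h2a : ∃ c : B1 n, a + a = A.d n c) (v : B1 n) :
    ∃ c : B1 n, (a + A.d n v) + (a + A.d n v) = A.d n c := by
  obtain ⟨c, hc⟩ := h2a
  refine ⟨c + v + A.P n (crossEff (A.H n) (A.d n v) a) + v, ?_⟩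
  rw [map_add, map_add, map_add, ← hc]
  have h := A.add_eq_add_dP_cross (A.d n v) a
  calc (a + A.d n v) + (a + A.d n v) = a + (A.d n v + a) + A.d n v := by simp only [add_assoc]
    _ = _ := by rw [h]; simp only [add_assoc]

/-- The value of the Massey product expression for the choices `ā = c̄ = 1 + 1` and
`e = f + P(H b)`, where `∂f = b + b`. -/
lemma massey_expr_eq {n : ℕ} (b : B0 n) (f : B1 n) (hf : b + b = A.d n f) :
    -(A.smulr (Nat.add_zero n) (f + A.P n (A.H n b)) (A.one + A.one)) +
      A.smul (Nat.zero_add n) (A.one + A.one) f = A.P n (crossEff (A.H n) b b) := by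
  have hH : A.H n (A.d n f) = A.H n b + A.H n b + crossEff (A.H n) b b := by
    rw [← hf]; unfold crossEff; abel
  rw [A.smulr_two, A.two_smul, hH, map_add, map_add]
  have hc : (f + A.P n (A.H n b)) + (f + A.P n (A.H n b))
      = f + f + (A.P n (A.H n b) + A.P n (A.H n b)) := by
    calc _ = f + (A.P n (A.H n b) + f) + A.P n (A.H n b) := by simp only [add_assoc]
      _ = _ := by rw [A.P_add_comm]; simp only [add_assoc]
  rw [hc, ← add_assoc (f + f) (_ + _) (A.P n (crossEff _ _ _)), neg_add_cancel_left]

end QuadraticPairAlgebra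

/-- Let `B` be a quadratic pair algebra and `α ∈ h₀B_n` (represented by `a`)
with `2α = 0`.  Then the Massey product `⟨2, α, 2⟩ ⊆ h₁B_n` is defined (the requisite
elements `e`, `f` exist for all representatives, and all its members lie in
`h₁B_n = Ker ∂`), and the k-invariant satisfies `k(α) = P((ā|ā)_H) ∈ ⟨2, α, 2⟩` for every
representative `ā` of `α`. -/
theorem quadraticPairAlgebra_massey_two_alpha_two (A : QuadraticPairAlgebra B0 B1 Bee)
    (n : ℕ) (a : B0 n) (h2a : ∃ c : B1 n, a + a = A.d n c) :
    (∀ (u w : B1 0) (v : B1 n),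
      ∃ e f : B1 n,
        A.d n e = A.mul (Nat.zero_add n) (A.one + A.one + A.d 0 u) (a + A.d n v) ∧
        A.d n f = A.mul (Nat.add_zero n) (a + A.d n v) (A.one + A.one + A.d 0 w)) ∧
    (∀ z ∈ massey2a2 A n a, A.d n z = 0) ∧
    (∀ v : B1 n,
      A.P n (crossEff (A.H n) (a + A.d n v) (a + A.d n v)) ∈ massey2a2 A n a) := by
  refine ⟨fun u w v => ?_, ?_, fun v => ?_⟩
  · obtain ⟨c, hc⟩ := A.exists_add_self_eq_d h2a v
    refine ⟨c + A.P n (A.H n (a + A.d n v)) + A.smulr (Nat.zero_add n) u (a + A.d n v)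
      + A.P n (A.mulee (Nat.zero_add n) (crossEff (A.H 0) (A.d 0 u) (A.one + A.one))
          (A.H n (a + A.d n v))),
      c + A.smul (Nat.add_zero n) (a + A.d n v) w, ?_, ?_⟩
    · rw [A.add_mul, A.two_mul, hc]
      simp only [map_add, A.d_smulr]
    · rw [A.mul_add, A.mul_two, hc, map_add, A.d_smul]
  · rintro z ⟨u, w, v, e, f, he, hf, rfl⟩
    rw [map_add, map_neg, A.d_smulr, A.d_smul, he, hf,
      A.mul_assoc_of_eq _ _ (Nat.add_zero n) (Nat.zero_add n), neg_add_cancel]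
  · obtain ⟨f, hf⟩ := A.exists_add_self_eq_d h2a v
    refine ⟨0, 0, v, f + A.P n (A.H n (a + A.d n v)), f, ?_, ?_, ?_⟩
    · rw [map_zero, add_zero, A.two_mul, hf, map_add]
    · rw [map_zero, add_zero, A.mul_two, hf]
    · rw [map_zero, add_zero, A.massey_expr_eq _ f hf]
end

section
/- Let C be an E∞-quadratic pair algebra. Then h₀C is a commutative ℕ-graded ring: for x₁ ∈ C_{n₁,0} and x₂ ∈ C_{n₂,0} the classes in h₀C satisfy [x₁·x₂] = (−1)^{n₁·n₂}[x₂·x₁]. Moreover, for s₁ ∈ C_{n₁,1} with ∂(s₁) = 0 and x₂ ∈ C_{n₂,0}, one has s₁·x₂ = (−1)^{n₁·n₂} x₂·s₁ in C_{n₁+n₂,1}; in particular the h₀C-bimodule h₁C is symmetric. -/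
/-- The block transposition `τ_{p,q} ∈ Σ_{p+q}` interchanging the first `p` and the
last `q` elements. -/
def blockPerm (p q : ℕ) : Equiv.Perm (Fin (p + q)) :=
  (finAddFlip.trans (finCongr (Nat.add_comm q p)) : Fin (p + q) ≃ Fin (p + q))

/-- `binom(ε,2)`: equal to `0` for `ε = 1` and to `1` for `ε = −1`. -/
def signBinom (u : ℤˣ) : ℤ := if u = 1 then 0 else 1

variable {B0 B1 Bee : ℕ → Type*}
  [∀ n, AddGroup (B0 n)] [∀ n, AddGroup (B1 n)] [∀ n, AddCommGroup (Bee n)]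

/-- An E∞-quadratic pair algebra: a quadratic pair algebra `C` such that each `C_{n,*}`
carries a right action of a symmetric track sign group
`{±1} → Σ̃ₙ →δ→ Σₙ →sign→ {±1}` (a sign group over the symmetric group `Σₙ` with
`ε = sign`), together with cup-one products `⌣₁ : C_{n,0} × C_{m,0} → C_{n+m,1}`
measuring the lack of commutativity via the block transpositions `τ_{p,q}`. -/
structure EInftyQuadraticPairAlgebra
    (Gt : ℕ → Type*) [∀ n, Group (Gt n)]
    (δ : ∀ n, Gt n →* Equiv.Perm (Fin n)) (ω : ∀ n, Gt n)
    extends QuadraticPairAlgebra B0 B1 Bee where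
  -- sign group structure of the symmetric track groups
  δ_surj : ∀ n, Function.Surjective (δ n)
  ω_ne_one : ∀ n, ω n ≠ 1
  ker_δ : ∀ (n : ℕ) (t : Gt n), δ n t = 1 ↔ t = 1 ∨ t = ω n
  -- right action of Σₙ by quadratic pair module morphisms
  act0 : ∀ n, B0 n → Equiv.Perm (Fin n) → B0 n
  act1 : ∀ n, B1 n → Equiv.Perm (Fin n) → B1 n
  actee : ∀ n, Bee n → Equiv.Perm (Fin n) → Bee n
  act0_add : ∀ (n) (g : Equiv.Perm (Fin n)) (x y : B0 n),
    act0 n (x + y) g = act0 n x g + act0 n y g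
  act1_add : ∀ (n) (g : Equiv.Perm (Fin n)) (x y : B1 n),
    act1 n (x + y) g = act1 n x g + act1 n y g
  actee_add : ∀ (n) (g : Equiv.Perm (Fin n)) (x y : Bee n),
    actee n (x + y) g = actee n x g + actee n y g
  act0_one : ∀ (n) (x : B0 n), act0 n x 1 = x
  act1_one : ∀ (n) (x : B1 n), act1 n x 1 = x
  actee_one : ∀ (n) (x : Bee n), actee n x 1 = x
  act0_mul : ∀ (n) (x : B0 n) (g g' : Equiv.Perm (Fin n)),
    act0 n x (g * g') = act0 n (act0 n x g) g'
  act1_mul : ∀ (n) (x : B1 n) (g g' : Equiv.Perm (Fin n)),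
    act1 n x (g * g') = act1 n (act1 n x g) g'
  actee_mul : ∀ (n) (x : Bee n) (g g' : Equiv.Perm (Fin n)),
    actee n x (g * g') = actee n (actee n x g) g'
  act_d : ∀ (n) (s : B1 n) (g : Equiv.Perm (Fin n)), d n (act1 n s g) = act0 n (d n s) g
  act_P : ∀ (n) (a : Bee n) (g : Equiv.Perm (Fin n)), act1 n (P n a) g = P n (actee n a g)
  act_H : ∀ (n) (x : B0 n) (g : Equiv.Perm (Fin n)), actee n (H n x) g = H n (act0 n x g)
  -- the bracket `⟨−,−⟩ : C_{n,0} × Σ̃ₙ → C_{n,1}` of the sign group action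
  br : ∀ n, B0 n → Gt n → B1 n
  br_add : ∀ (n) (x y : B0 n) (t : Gt n),
    br n (x + y) t = br n x t + br n y t
      + P n (crossEff (H n)
          (-(act0 n x (δ n t)) + ((Equiv.Perm.sign (δ n t) : ℤˣ) : ℤ) • x)
          (act0 n y (δ n t)))
  br_d : ∀ (n) (x : B0 n) (t : Gt n),
    ((Equiv.Perm.sign (δ n t) : ℤˣ) : ℤ) • x
        + signBinom (Equiv.Perm.sign (δ n t)) • d n (P n (H n x))
      = act0 n x (δ n t) + d n (br n x t)
  br_d1 : ∀ (n) (z : B1 n) (t : Gt n),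
    ((Equiv.Perm.sign (δ n t) : ℤˣ) : ℤ) • z
        + signBinom (Equiv.Perm.sign (δ n t)) • P n (H n (d n z))
      = act1 n z (δ n t) + br n (d n z) t
  br_mul : ∀ (n) (x : B0 n) (s t : Gt n),
    br n x (s * t) = br n (act0 n x (δ n s)) t
      + br n (((Equiv.Perm.sign (δ n t) : ℤˣ) : ℤ) • x
          + signBinom (Equiv.Perm.sign (δ n t)) • d n (P n (H n x))) s
  br_omega : ∀ (n) (x : B0 n), br n x (ω n) = P n (crossEff (H n) x x)
  -- compatibility of the product with the sign group actions (cross products of blocks)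
  act_mul : ∀ {p q r : ℕ} (h : p + q = r) (x₁ : B0 p) (x₂ : B0 q)
      (g₁ : Equiv.Perm (Fin p)) (g₂ : Equiv.Perm (Fin q)),
    mul h (act0 p x₁ g₁) (act0 q x₂ g₂)
      = act0 r (mul h x₁ x₂)
          ((finCongr h).permCongr (finSumFinEquiv.permCongr (g₁.sumCongr g₂)))
  -- the cup-one product and its two defining laws
  cup : ∀ {p q r : ℕ}, p + q = r → B0 p → B0 q → B1 r
  cup_comm0 : ∀ {p q r : ℕ} (h : p + q = r) (x₁ : B0 p) (x₂ : B0 q),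
    act0 r (mul ((Nat.add_comm q p).trans h) x₂ x₁) ((finCongr h).permCongr (blockPerm p q))
        + d r (cup h x₁ x₂)
      = mul h x₁ x₂
        + act0 r (d r (P r (mulee ((Nat.add_comm q p).trans h) (H q x₂)
            (H p (d p (P p (H p x₁))) - H p x₁))))
            ((finCongr h).permCongr (blockPerm p q))
  cup_comm1 : ∀ {p q r : ℕ} (h : p + q = r) (s₁ : B1 p) (x₂ : B0 q),
    act1 r (smul ((Nat.add_comm q p).trans h) x₂ s₁) ((finCongr h).permCongr (blockPerm p q))
        + cup h (d p s₁) x₂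
      = smulr h s₁ x₂
        + act1 r (P r (mulee ((Nat.add_comm q p).trans h) (H q x₂)
            (H p (d p (P p (H p (d p s₁)))) - H p (d p s₁))))
            ((finCongr h).permCongr (blockPerm p q))

/-! ### The sign of the block transposition -/

lemma finRotate_pow_val (n k : ℕ) (i : Fin n) :
    (((finRotate n) ^ k) i : ℕ) = (i + k) % n := by
  induction k with
  | zero => simp [Nat.mod_eq_of_lt i.2]
  | succ k ih =>
    rw [pow_succ', Equiv.Perm.mul_apply, finRotate_apply]
    have := i.neZero
    rw [Fin.val_add, ih, Fin.val_one', ← Nat.add_mod, Nat.add_assoc]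

lemma blockPerm_eq_finRotate_pow (p q : ℕ) :
    blockPerm p q = (finRotate (p + q)) ^ q := by
  ext i
  rw [finRotate_pow_val]
  refine Fin.addCases (fun j => ?_) (fun j => ?_) i
  · have : (j : ℕ) + q < p + q := by omega
    simp [blockPerm, Nat.mod_eq_of_lt this]
  · have h : p + (j : ℕ) + q = j + (p + q) := by omega
    have : (j : ℕ) < p + q := by omega
    simp [blockPerm, h, Nat.mod_eq_of_lt this]

lemma sign_blockPerm (p q : ℕ) : Equiv.Perm.sign (blockPerm p q) = (-1) ^ (p * q) := by
  rw [blockPerm_eq_finRotate_pow, map_pow, sign_finRotate, ← pow_mul]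
  cases q with
  | zero => simp
  | succ q =>
    -- `(p + q)(q + 1) = p(q + 1) + q(q + 1)` and `q(q + 1)` is even.
    have h : (p + (q + 1) - 1) * (q + 1) = p * (q + 1) + q * (q + 1) := by
      rw [← Nat.add_assoc, Nat.add_sub_cancel]; ring
    rw [h, pow_add, (Nat.even_mul_succ_self q).neg_one_pow, _root_.mul_one]

/-! ### Vanishing at zero -/

lemma IsSquareGroup.cross_zero_left {Xe Xee : Type*} [AddGroup Xe] [AddCommGroup Xee]
    {P : Xee →+ Xe} {H : Xe → Xee} (h : IsSquareGroup P H) (a : Xe) : crossEff H 0 a = 0 := by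
  simpa using h.cross_add_left 0 0 a

lemma IsSquareGroup.H_zero {Xe Xee : Type*} [AddGroup Xe] [AddCommGroup Xee]
    {P : Xee →+ Xe} {H : Xe → Xee} (h : IsSquareGroup P H) : H 0 = 0 := by
  simpa [crossEff] using h.cross_zero_left 0

namespace QuadraticPairAlgebra

variable (A : QuadraticPairAlgebra B0 B1 Bee) {p q r : ℕ} (h : p + q = r)

lemma mulee_zero (a : Bee p) : A.mulee h a 0 = 0 := by
  simpa using A.mulee_add h a 0 0

lemma zero_mulee (a : Bee q) : A.mulee h 0 a = 0 := by
  simpa using A.add_mulee h 0 0 a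

lemma mul_zero (x : B0 p) : A.mul h x 0 = 0 := by
  simpa using A.mul_add h x 0 0

lemma smul_zero (x : B0 p) : A.smul h x 0 = 0 := by
  simpa using A.smul_add h x 0 0

lemma zero_smulr (x : B0 q) : A.smulr h 0 x = 0 := by
  simpa [(A.sq0 p).cross_zero_left, A.zero_mulee] using A.add_smulr h 0 0 x

end QuadraticPairAlgebra

namespace EInftyQuadraticPairAlgebra

variable {Gt : ℕ → Type*} [∀ n, Group (Gt n)]
  {δ : ∀ n, Gt n →* Equiv.Perm (Fin n)} {ω : ∀ n, Gt n}
  (A : EInftyQuadraticPairAlgebra (B0 := B0) (B1 := B1) (Bee := Bee) Gt δ ω)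

lemma act1_zero (n : ℕ) (g : Equiv.Perm (Fin n)) : A.act1 n 0 g = 0 := by
  simpa using A.act1_add n g 0 0

/-- The correction term in the level-1 cup-one law vanishes over `0 ∈ C₀`. -/
lemma P_mulee_T_zero {p q r : ℕ} (h : q + p = r) (a : Bee q) :
    A.P r (A.mulee h a (A.H p (A.d p (A.P p (A.H p 0))) - A.H p 0)) = 0 := by
  simp [(A.sq0 p).H_zero, A.mulee_zero]

lemma cup_zero_left {p q r : ℕ} (h : p + q = r) (x : B0 q) : A.cup h 0 x = 0 := by
  simpa [A.smul_zero, A.zero_smulr, A.act1_zero, A.P_mulee_T_zero] using A.cup_comm1 h 0 x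

lemma br_zero (n : ℕ) (t : Gt n) : A.br n 0 t = 0 := by
  simpa [A.act1_zero, (A.sq0 n).H_zero] using (A.br_d1 n 0 t).symm

/-! ### Permutations act through their sign -/

/-- On `h₀` a permutation acts through its sign. -/
lemma exists_act0_eq (n : ℕ) (x : B0 n) (g : Equiv.Perm (Fin n)) :
    ∃ u : B1 n, A.act0 n x g = ((Equiv.Perm.sign g : ℤˣ) : ℤ) • x + A.d n u := by
  obtain ⟨t, rfl⟩ := A.δ_surj n g
  refine ⟨signBinom (Equiv.Perm.sign (δ n t)) • A.P n (A.H n x) - A.br n x t, ?_⟩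
  rw [map_sub, map_zsmul, ← add_sub_assoc, A.br_d, add_sub_cancel_right]

/-- On `h₁` a permutation acts through its sign. -/
lemma act1_eq_of_d_eq_zero (n : ℕ) (z : B1 n) (hz : A.d n z = 0) (g : Equiv.Perm (Fin n)) :
    A.act1 n z g = ((Equiv.Perm.sign g : ℤˣ) : ℤ) • z := by
  obtain ⟨t, rfl⟩ := A.δ_surj n g
  simpa [hz, A.br_zero, (A.sq0 n).H_zero] using (A.br_d1 n z t).symm

end EInftyQuadraticPairAlgebra

/-- For an E∞-quadratic pair algebra `C`, the ring `h₀C` is graded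
commutative: `[x₁·x₂] = (−1)^{n₁n₂}[x₂·x₁]` (the two products differ by a boundary), and
for `s₁ ∈ Ker ∂ ⊆ C_{n₁,1}` and `x₂ ∈ C_{n₂,0}` one has `s₁·x₂ = (−1)^{n₁n₂} x₂·s₁`, so
the `h₀C`-bimodule `h₁C` is symmetric. -/
theorem eInftyQuadraticPairAlgebra_h0_comm
    {Gt : ℕ → Type*} [∀ n, Group (Gt n)]
    {δ : ∀ n, Gt n →* Equiv.Perm (Fin n)} {ω : ∀ n, Gt n}
    (A : EInftyQuadraticPairAlgebra (B0 := B0) (B1 := B1) (Bee := Bee) Gt δ ω) :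
    (∀ (n₁ n₂ : ℕ) (x₁ : B0 n₁) (x₂ : B0 n₂),
      ∃ s : B1 (n₁ + n₂),
        A.mul rfl x₁ x₂ =
          ((-1 : ℤ) ^ (n₁ * n₂)) • A.mul (Nat.add_comm n₂ n₁) x₂ x₁
            + A.d (n₁ + n₂) s) ∧
    (∀ (n₁ n₂ : ℕ) (s₁ : B1 n₁) (x₂ : B0 n₂), A.d n₁ s₁ = 0 →
      A.smulr rfl s₁ x₂ = ((-1 : ℤ) ^ (n₁ * n₂)) • A.smul (Nat.add_comm n₂ n₁) x₂ s₁) := by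
  have hsign : ∀ p q : ℕ, ((Equiv.Perm.sign
      ((finCongr (rfl : p + q = p + q)).permCongr (blockPerm p q)) : ℤˣ) : ℤ)
      = (-1) ^ (p * q) := by
    intro p q
    rw [Equiv.Perm.sign_permCongr, sign_blockPerm]
    simp
  refine ⟨fun n₁ n₂ x₁ x₂ => ?_, fun n₁ n₂ s₁ x₂ hs => ?_⟩
  · obtain ⟨u, hu⟩ := A.exists_act0_eq _ (A.mul (Nat.add_comm n₂ n₁) x₂ x₁)
      ((finCongr rfl).permCongr (blockPerm n₁ n₂))
    have hc := A.cup_comm0 rfl x₁ x₂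
    rw [hu, hsign, ← A.act_d] at hc
    generalize A.act1 _ _ _ = w at hc
    refine ⟨u + A.cup rfl x₁ x₂ - w, ?_⟩
    rw [map_sub, map_add, ← add_sub_assoc, ← add_assoc]
    exact eq_sub_of_add_eq hc.symm
  · have hz : A.d _ (A.smul (Nat.add_comm n₂ n₁) x₂ s₁) = 0 := by
      rw [A.d_smul, hs, A.mul_zero]
    have hc := A.cup_comm1 rfl s₁ x₂
    rw [hs, A.cup_zero_left, A.P_mulee_T_zero, A.act1_zero, add_zero, add_zero,
      A.act1_eq_of_d_eq_zero _ _ hz, hsign] at hc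
    exact hc.symm
end

section
/- Let B be a pair algebra such that (h₀B)_n = 0 for all odd n and (h₁B)_n = 0 for all even n. Let D be the ℕ-graded pair algebra with D_{n,0} = B_{n,0} for n even and D_{n,0} = 0 for n odd, D_{n,1} = B_{n,1} for n even and D_{n,1} = (h₁B)_n for n odd, and boundary ∂_D equal to ∂ in even degrees and 0 in odd degrees (with multiplications restricted from B). Then both of the following morphisms of pair algebras are quasi-isomorphisms, i.e. induce isomorphisms on h₀ and h₁ in every degree: (i) the inclusion D → B (the identity on even-degree parts and the inclusion h₁B = Ker(∂) ⊆ B_{*,1} in odd degrees); and (ii) the morphism D → (0: h₁B → h₀B), where (0: h₁B → h₀B) is the pair algebra with ring h₀B, bimodule h₁B and zero boundary, given on level 1 by 0 on the even-degree part and the identity on the odd-degree part, and on level 0 by the projection B_{n,0} → (h₀B)_n for n even and 0 for n odd. -/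
variable {B0 B1 : ℕ → Type*} [∀ n, AddCommGroup (B0 n)] [∀ n, AddCommGroup (B1 n)]

/-- Degree-`n` level-0 part of the pair algebra `D`: all of `B_{n,0}` for `n` even,
zero for `n` odd. -/
def D0sub (A : PairAlgebra B0 B1) (n : ℕ) : AddSubgroup (B0 n) :=
  if Even n then ⊤ else ⊥

/-- Degree-`n` level-1 part of the pair algebra `D`: all of `B_{n,1}` for `n` even,
`h₁B_n = Ker ∂` for `n` odd. -/
def D1sub (A : PairAlgebra B0 B1) (n : ℕ) : AddSubgroup (B1 n) :=
  if Even n then ⊤ else (A.d n).ker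

/-- The boundary of `D`: equal to `∂` in even degrees and `0` in odd degrees. -/
def dD (A : PairAlgebra B0 B1) (n : ℕ) : ↥(D1sub A n) →+ ↥(D0sub A n) where
  toFun s := ⟨if Even n then A.d n s.1 else 0, by
    by_cases h : Even n <;> simp [D0sub, h]⟩
  map_zero' := by
    ext
    by_cases h : Even n <;> simp [h]
  map_add' s t := by
    ext
    by_cases h : Even n <;> simp [h]

/-- Level-0 part of the morphism `D → (0 : h₁B → h₀B)`: the projection
`B_{n,0} → (h₀B)_n` in even degrees, `0` in odd degrees. -/
def f0D (A : PairAlgebra B0 B1) (n : ℕ) (x : ↥(D0sub A n)) : B0 n ⧸ (A.d n).range :=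
  if Even n then QuotientAddGroup.mk x.1 else 0

/-- Level-1 part of the morphism `D → (0 : h₁B → h₀B)`: zero in even degrees, the
identity on `h₁B_n` in odd degrees. -/
def f1D (A : PairAlgebra B0 B1) (n : ℕ) (s : ↥(D1sub A n)) : ↥((A.d n).ker) :=
  if h : Even n then 0 else ⟨s.1, by
    have hs := s.2
    simp only [D1sub, if_neg h] at hs
    exact hs⟩

theorem mem_D0sub_of_even (A : PairAlgebra B0 B1) {n : ℕ} (h : Even n) (x : B0 n) :
    x ∈ D0sub A n := by
  simp [D0sub, h]

theorem D0sub_eq_zero_of_odd (A : PairAlgebra B0 B1) {n : ℕ} (h : ¬ Even n)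
    (x : ↥(D0sub A n)) : x = 0 := by
  have hx := x.2
  simp only [D0sub, if_neg h] at hx
  exact Subtype.ext hx

theorem mem_D1sub_of_even (A : PairAlgebra B0 B1) {n : ℕ} (h : Even n) (s : B1 n) :
    s ∈ D1sub A n := by
  simp [D1sub, h]

theorem mem_D1sub_of_d_eq_zero (A : PairAlgebra B0 B1) {n : ℕ} {s : B1 n}
    (hs : A.d n s = 0) : s ∈ D1sub A n := by
  by_cases h : Even n <;> simp [D1sub, h, hs]

theorem coe_dD_of_even (A : PairAlgebra B0 B1) {n : ℕ} (h : Even n) (t : ↥(D1sub A n)) :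
    (dD A n t).1 = A.d n t.1 := by
  simp [dD, h]

theorem f0D_of_even (A : PairAlgebra B0 B1) {n : ℕ} (h : Even n) (x : ↥(D0sub A n)) :
    f0D A n x = QuotientAddGroup.mk x.1 := by
  simp [f0D, h]

theorem f1D_of_odd (A : PairAlgebra B0 B1) {n : ℕ} (h : ¬ Even n) (t : ↥(D1sub A n)) :
    (f1D A n t).1 = t.1 := by
  simp [f1D, h]

/-- STATEMENT 16: If `B` is a pair algebra with `(h₀B)_n = 0` for all odd `n` and
`(h₁B)_n = 0` for all even `n`, and `D` is the pair algebra which agrees with `B` in even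
degrees and equals `(0 : (h₁B)_n → 0)` in odd degrees, then the inclusion `D → B` and the
canonical morphism `D → (0 : h₁B → h₀B)` both induce isomorphisms on `h₀` and `h₁` in
every degree (each stated below as injectivity and surjectivity of the induced maps on
`h₀ = Coker ∂` and `h₁ = Ker ∂`). -/
theorem evenPairAlgebra_quasi_isos (A : PairAlgebra B0 B1)
    (hodd : ∀ n : ℕ, Odd n → ∀ x : B0 n, ∃ s : B1 n, x = A.d n s)
    (heven : ∀ n : ℕ, Even n → ∀ s : B1 n, A.d n s = 0 → s = 0) :
    ∀ n : ℕ,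
      -- (i) the inclusion D → B is a quasi-isomorphism:
      -- h₀-surjectivity
      ((∀ y : B0 n, ∃ (x : ↥(D0sub A n)) (s : B1 n), y = x.1 + A.d n s) ∧
      -- h₀-injectivity
      (∀ x : ↥(D0sub A n), (∃ s : B1 n, x.1 = A.d n s) → ∃ t : ↥(D1sub A n), x = dD A n t) ∧
      -- h₁-surjectivity
      (∀ s : B1 n, A.d n s = 0 → ∃ t : ↥(D1sub A n), dD A n t = 0 ∧ t.1 = s) ∧
      -- h₁-injectivity
      (∀ t t' : ↥(D1sub A n), dD A n t = 0 → dD A n t' = 0 → t.1 = t'.1 → t = t')) ∧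
      -- (ii) the morphism D → (0 : h₁B → h₀B) is a quasi-isomorphism:
      -- h₀-surjectivity
      ((∀ y : B0 n ⧸ (A.d n).range, ∃ x : ↥(D0sub A n), f0D A n x = y) ∧
      -- h₀-injectivity
      (∀ x : ↥(D0sub A n), f0D A n x = 0 → ∃ t : ↥(D1sub A n), x = dD A n t) ∧
      -- h₁-surjectivity
      (∀ s : ↥((A.d n).ker), ∃ t : ↥(D1sub A n), dD A n t = 0 ∧ f1D A n t = s) ∧
      -- h₁-injectivity
      (∀ t t' : ↥(D1sub A n), dD A n t = 0 → dD A n t' = 0 →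
        f1D A n t = f1D A n t' → t = t')) := by
  intro n
  by_cases h : Even n
  · -- `∂` is injective in degree `n`, so cycles of `D` vanish.
    have hcyc : ∀ t : ↥(D1sub A n), dD A n t = 0 → t = 0 := fun t ht =>
      Subtype.ext (heven n h t.1 (by rw [← coe_dD_of_even A h, ht]; rfl))
    have hbdry : ∀ x : ↥(D0sub A n), (∃ s : B1 n, x.1 = A.d n s) →
        ∃ t : ↥(D1sub A n), x = dD A n t := by
      rintro x ⟨s, hs⟩
      exact ⟨⟨s, mem_D1sub_of_even A h s⟩, Subtype.ext (by rw [coe_dD_of_even A h, hs])⟩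
    refine ⟨⟨fun y => ⟨⟨y, mem_D0sub_of_even A h y⟩, 0, by simp⟩, hbdry, ?_,
      fun t t' _ _ e => Subtype.ext e⟩, ?_, ?_, ?_, ?_⟩
    · intro s hs
      exact ⟨0, map_zero _, (heven n h s hs).symm⟩
    · intro y
      obtain ⟨y, rfl⟩ := QuotientAddGroup.mk_surjective y
      exact ⟨⟨y, mem_D0sub_of_even A h y⟩, f0D_of_even A h _⟩
    · intro x hx
      rw [f0D_of_even A h, QuotientAddGroup.eq_zero_iff] at hx
      obtain ⟨s, hs⟩ := hx
      exact hbdry x ⟨s, hs.symm⟩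
    · intro s
      refine ⟨0, map_zero _, Subtype.ext ?_⟩
      rw [heven n h s.1 s.2]
      simp [f1D, h]
    · intro t t' ht ht' _
      rw [hcyc t ht, hcyc t' ht']
  · have hn : Odd n := Nat.not_even_iff_odd.mp h
    have hD0 := D0sub_eq_zero_of_odd A h
    refine ⟨⟨?_, fun x _ => ⟨0, by rw [hD0 x, map_zero]⟩, ?_, fun t t' _ _ e => Subtype.ext e⟩,
      ?_, fun x _ => ⟨0, by rw [hD0 x, map_zero]⟩, ?_, ?_⟩
    · intro y
      obtain ⟨s, hs⟩ := hodd n hn y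
      exact ⟨0, s, by simp [hs]⟩
    · intro s hs
      exact ⟨⟨s, mem_D1sub_of_d_eq_zero A hs⟩, hD0 _, rfl⟩
    · intro y
      obtain ⟨y, rfl⟩ := QuotientAddGroup.mk_surjective y
      obtain ⟨s, hs⟩ := hodd n hn y
      refine ⟨0, ?_⟩
      have hy : y ∈ (A.d n).range := ⟨s, hs.symm⟩
      rw [(QuotientAddGroup.eq_zero_iff y).mpr hy]
      simp [f0D, h]
    · intro s
      exact ⟨⟨s.1, mem_D1sub_of_d_eq_zero A s.2⟩, hD0 _, Subtype.ext (f1D_of_odd A h _)⟩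
    · intro t t' _ _ e
      apply Subtype.ext
      rw [← f1D_of_odd A h t, ← f1D_of_odd A h t', e]
end
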